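/- arXiv:1007.3436 — 2 statements merged into one kernel-verified Lean document; each statement's English description precedes it below -/
import Mathlib

section
/- For every integer n ≥ 2, the improper integral of 1/(1 − x_1² x_2² ··· x_n²) over the unit cube (0,1)^n equals Σ_{q=0}^∞ 1/(2q + 1)^n. -/
open MeasureTheory Real

/-!
Expand `(1 - ∏ xᵢ ^ k)⁻¹` as the geometric series `∑ (∏ xᵢ ^ k) ^ q`. By Fubini, the `q`-th term
integrates to the product of the one-variable moments `∫₀¹ t ^ (k * q) = 1 / (k * q + 1)`. The
integrand is unbounded near the corner `(1, …, 1)`; the interchange of sum and integral rests on the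
summability of these products, which holds from dimension two on.
-/

theorem prod_lt_one_of_nonneg_of_lt_one {ι R : Type*} [CommMonoidWithZero R] [PartialOrder R]
    [ZeroLEOneClass R] [PosMulMono R] {s : Finset ι} (hs : s.Nonempty) {f : ι → R}
    (h0 : ∀ i ∈ s, 0 ≤ f i) (h1 : ∀ i ∈ s, f i < 1) : ∏ i ∈ s, f i < 1 := by
  classical
  obtain ⟨j, hj⟩ := hs
  have hrest : ∏ i ∈ s.erase j, f i ≤ 1 :=
    Finset.prod_le_one (fun i hi => h0 i (Finset.mem_of_mem_erase hi))
      fun i hi => (h1 i (Finset.mem_of_mem_erase hi)).le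
  calc ∏ i ∈ s, f i = f j * ∏ i ∈ s.erase j, f i := (Finset.mul_prod_erase s f hj).symm
    _ ≤ f j := mul_le_of_le_one_right (h0 j hj) hrest
    _ < 1 := h1 j hj

theorem hasSum_integral_pow_of_norm_lt_one {α 𝕜 : Type*} {mα : MeasurableSpace α}
    {μ : Measure α} [IsFiniteMeasure μ] [NormedDivisionRing 𝕜] [NormedSpace ℝ 𝕜] {f : α → 𝕜}
    (hf : AEStronglyMeasurable f μ) (hlt : ∀ᵐ x ∂μ, ‖f x‖ < 1)
    (hsum : Summable fun q : ℕ => ∫ x, ‖f x‖ ^ q ∂μ) :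
    HasSum (fun q : ℕ => ∫ x, f x ^ q ∂μ) (∫ x, (1 - f x)⁻¹ ∂μ) := by
  have hint (q : ℕ) : Integrable (fun x => f x ^ q) μ := by
    refine .of_bound (hf.pow q) 1 (hlt.mono fun x hx => ?_)
    rw [norm_pow]
    exact pow_le_one₀ (norm_nonneg _) hx.le
  have hgeom : ∫ x, ∑' q : ℕ, f x ^ q ∂μ = ∫ x, (1 - f x)⁻¹ ∂μ :=
    integral_congr_ae (hlt.mono fun _ => tsum_geometric_of_norm_lt_one)
  rw [← hgeom]
  exact hasSum_integral_of_summable_integral_norm hint (by simpa only [norm_pow] using hsum)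

theorem hasSum_prod_integral_pow_of_norm_lt_one {ι 𝕜 : Type*} [Fintype ι] [Nonempty ι]
    {α : ι → Type*} [∀ i, MeasurableSpace (α i)] {μ : ∀ i, Measure (α i)}
    [∀ i, IsFiniteMeasure (μ i)] [RCLike 𝕜] {f : ∀ i, α i → 𝕜}
    (hf : ∀ i, AEStronglyMeasurable (f i) (μ i)) (hlt : ∀ i, ∀ᵐ t ∂μ i, ‖f i t‖ < 1)
    (hsum : Summable fun q : ℕ => ∏ i, ∫ t, ‖f i t‖ ^ q ∂μ i) :
    HasSum (fun q : ℕ => ∏ i, ∫ t, f i t ^ q ∂μ i)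
      (∫ x, (1 - ∏ i, f i (x i))⁻¹ ∂Measure.pi μ) := by
  have hmeas : AEStronglyMeasurable (fun x : ∀ i, α i => ∏ i, f i (x i)) (Measure.pi μ) :=
    Finset.aestronglyMeasurable_fun_prod _ fun i _ =>
      (hf i).comp_quasiMeasurePreserving (Measure.quasiMeasurePreserving_eval μ i)
  have hprod_lt : ∀ᵐ x ∂Measure.pi μ, ‖∏ i, f i (x i)‖ < 1 := by
    have hcoord : ∀ᵐ x ∂Measure.pi μ, ∀ i, ‖f i (x i)‖ < 1 :=
      ae_all_iff.2 fun i => Measure.tendsto_eval_ae_ae.eventually (hlt i)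
    filter_upwards [hcoord] with x hx
    rw [norm_prod]
    exact prod_lt_one_of_nonneg_of_lt_one Finset.univ_nonempty (fun i _ => norm_nonneg _)
      fun i _ => hx i
  have hfubini (q : ℕ) :
      ∫ x, (∏ i, f i (x i)) ^ q ∂Measure.pi μ = ∏ i, ∫ t, f i t ^ q ∂μ i := by
    simp only [← Finset.prod_pow]
    exact integral_fintype_prod_eq_prod fun i t => f i t ^ q
  have hfubini_norm (q : ℕ) :
      ∫ x, ‖∏ i, f i (x i)‖ ^ q ∂Measure.pi μ = ∏ i, ∫ t, ‖f i t‖ ^ q ∂μ i := by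
    simp only [norm_prod, ← Finset.prod_pow]
    exact integral_fintype_prod_eq_prod fun i t => ‖f i t‖ ^ q
  simpa only [hfubini] using hasSum_integral_pow_of_norm_lt_one hmeas hprod_lt
    (by simpa only [hfubini_norm] using hsum)

theorem setIntegral_Ioo_pow {a b : ℝ} (hab : a ≤ b) (m : ℕ) :
    ∫ t in Set.Ioo a b, t ^ m = (b ^ (m + 1) - a ^ (m + 1)) / (m + 1) := by
  rw [← integral_Ioc_eq_integral_Ioo, ← intervalIntegral.integral_of_le hab, integral_pow]

theorem summable_one_div_mul_add_one_pow {k n : ℕ} (hk : k ≠ 0) (hn : 1 < n) :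
    Summable fun q : ℕ => (1 : ℝ) / (k * q + 1) ^ n := by
  have hinj : Function.Injective fun q : ℕ => k * q + 1 :=
    (add_left_injective 1).comp (mul_right_injective₀ hk)
  simpa [Function.comp_def] using (summable_one_div_nat_pow.2 hn).comp_injective hinj

theorem unit_cube_integral_eq_tsum_odd_general {ι : Type*} [Fintype ι]
    (hι : 1 < Fintype.card ι) {k : ℕ} (hk : k ≠ 0) :
    ∫ x : ι → ℝ in Set.univ.pi fun _ => Set.Ioo (0 : ℝ) 1, (1 - ∏ i, x i ^ k)⁻¹ =
      ∑' q : ℕ, (1 : ℝ) / (k * q + 1) ^ Fintype.card ι := by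
  have : Nonempty ι := Fintype.card_pos_iff.1 (zero_lt_one.trans hι)
  have hmoment (q : ℕ) : ∫ t in Set.Ioo (0 : ℝ) 1, (t ^ k) ^ q = 1 / (k * q + 1) := by
    simp [← pow_mul, setIntegral_Ioo_pow zero_le_one]
  have hmoment_norm (q : ℕ) : ∫ t in Set.Ioo (0 : ℝ) 1, ‖t ^ k‖ ^ q = 1 / (k * q + 1) := by
    rw [← hmoment q]
    refine setIntegral_congr_fun measurableSet_Ioo fun t ht => ?_
    simp only [norm_of_nonneg (pow_nonneg ht.1.le k)]
  have hlt : ∀ᵐ t ∂volume.restrict (Set.Ioo (0 : ℝ) 1), ‖t ^ k‖ < 1 :=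
    ae_restrict_of_forall_mem measurableSet_Ioo fun t ht => by
      rw [norm_of_nonneg (pow_nonneg ht.1.le k)]
      exact pow_lt_one₀ ht.1.le ht.2 hk
  have hsum := hasSum_prod_integral_pow_of_norm_lt_one (ι := ι)
    (fun _ => (continuous_pow k).aestronglyMeasurable) (fun _ => hlt)
    (by simpa only [hmoment_norm, Finset.prod_const, Finset.card_univ, one_div_pow] using
      summable_one_div_mul_add_one_pow hk hι)
  rw [volume_pi, Measure.restrict_pi_pi, ← hsum.tsum_eq]
  simp [hmoment]

theorem unit_cube_integral_eq_tsum_odd (n : ℕ) (hn : 2 ≤ n) :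
    (∫ x : Fin n → ℝ in Set.univ.pi fun _ => Set.Ioo (0 : ℝ) 1,
        (1 - ∏ i, (x i) ^ 2)⁻¹) =
      ∑' q : ℕ, (1 : ℝ) / (2 * (q : ℝ) + 1) ^ n := by
  simpa using unit_cube_integral_eq_tsum_odd_general (ι := Fin n)
    (by rwa [Fintype.card_fin]) two_ne_zero
end

section
/- For every integer n ≥ 2, ∫_{(0,1)^n} 1/(1 − x_1² x_2² ··· x_n²) dx_1 ··· dx_n = (1/(n−1)!) · ∫_0^∞ (ln(coth(x)))^{n−1} dx. -/
open MeasureTheory Real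

/-- The hyperbolic cotangent, `coth x = cosh x / sinh x`. -/
noncomputable def coth (x : ℝ) : ℝ := Real.cosh x / Real.sinh x

/-!
Both integrals are multiples of `∑ k, (2 k + 1)⁻ⁿ`. On the cube, expand `(1 - ∏ xᵢ²)⁻¹` into a
geometric series, each term of which splits as a product of one-variable integrals. On the other
side, `x ↦ log (coth (x / 2))` is an involution of `(0, ∞)` with derivative `-1 / sinh x`, so that
`∫ log (coth x) ^ m = ∫ u ^ m / (2 sinh u)`; now expand `1 / (2 sinh u) = ∑ k, e ^ (-(2 k + 1) u)`
and integrate termwise.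
-/

open Set

theorem summable_inv_mul_nat_add_one_pow {d n : ℕ} (hd : d ≠ 0) (hn : 1 < n) :
    Summable fun k : ℕ ↦ (((d * k : ℕ) + 1 : ℝ) ^ n)⁻¹ := by
  have injective : Function.Injective fun k : ℕ ↦ d * k + 1 := fun a b hab ↦ by simpa [hd] using hab
  simpa [Function.comp_def] using (summable_nat_pow_inv.2 hn).comp_injective injective

theorem hasSum_integral_pow_inv_one_sub {α : Type*} [MeasurableSpace α] {μ : Measure α}
    {f : α → ℝ} (hf : ∀ᵐ x ∂μ, f x ∈ Ico 0 1) (hint : ∀ k : ℕ, Integrable (fun x ↦ f x ^ k) μ)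
    (hsum : Summable fun k : ℕ ↦ ∫ x, f x ^ k ∂μ) :
    HasSum (fun k : ℕ ↦ ∫ x, f x ^ k ∂μ) (∫ x, (1 - f x)⁻¹ ∂μ) := by
  have norm_eq (k : ℕ) : ∫ x, ‖f x ^ k‖ ∂μ = ∫ x, f x ^ k ∂μ :=
    integral_congr_ae <| hf.mono fun x hx ↦ norm_of_nonneg (pow_nonneg hx.1 k)
  have geometric : ∫ x, (1 - f x)⁻¹ ∂μ = ∫ x, ∑' k : ℕ, f x ^ k ∂μ :=
    integral_congr_ae <| hf.mono fun x hx ↦ (tsum_geometric_of_lt_one hx.1 hx.2).symm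
  rw [geometric]
  exact hasSum_integral_of_summable_integral_norm hint (by simpa only [norm_eq] using hsum)

theorem integral_Ioo_zero_one_pow (k : ℕ) : ∫ x in Ioo (0 : ℝ) 1, x ^ k = ((k : ℝ) + 1)⁻¹ := by
  rw [← integral_Ioc_eq_integral_Ioo, ← intervalIntegral.integral_of_le zero_le_one]
  simp

section Cube

variable {ι : Type*} [Fintype ι]

theorem integrableOn_cube_prod_pow (k : ℕ) :
    IntegrableOn (fun x : ι → ℝ ↦ ∏ i, x i ^ k) (univ.pi fun _ ↦ Ioo 0 1) := by
  rw [IntegrableOn, volume_pi, Measure.restrict_pi_pi]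
  exact .fintype_prod (f := fun _ y ↦ y ^ k) fun _ ↦
    (continuous_pow k).integrableOn_Icc.mono_set Ioo_subset_Icc_self

theorem integral_cube_prod_pow (k : ℕ) :
    ∫ x : ι → ℝ in univ.pi fun _ ↦ Ioo 0 1, ∏ i, x i ^ k =
      (((k : ℝ) + 1) ^ Fintype.card ι)⁻¹ := by
  rw [volume_pi, Measure.restrict_pi_pi, integral_fintype_prod_eq_pow (fun y : ℝ ↦ y ^ k),
    integral_Ioo_zero_one_pow, inv_pow]

theorem prod_pow_mem_Ico_of_mem_cube [Nonempty ι] {d : ℕ} (hd : d ≠ 0) {x : ι → ℝ}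
    (hx : x ∈ univ.pi fun _ ↦ Ioo (0 : ℝ) 1) : ∏ i, x i ^ d ∈ Ico (0 : ℝ) 1 := by
  replace hx (i : ι) : x i ∈ Ioo 0 1 := hx i (mem_univ i)
  refine ⟨Finset.prod_nonneg fun i _ ↦ pow_nonneg (hx i).1.le d, ?_⟩
  calc
    ∏ i, x i ^ d < ∏ _i : ι, (1 : ℝ) :=
      Finset.prod_lt_prod_of_nonempty (fun i _ ↦ pow_pos (hx i).1 d)
        (fun i _ ↦ pow_lt_one₀ (hx i).1.le (hx i).2 hd) Finset.univ_nonempty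
    _ = 1 := Finset.prod_const_one

theorem hasSum_integral_cube_inv_one_sub_prod_pow [Nontrivial ι] {d : ℕ} (hd : d ≠ 0) :
    HasSum (fun k : ℕ ↦ (((d * k : ℕ) + 1 : ℝ) ^ Fintype.card ι)⁻¹)
      (∫ x : ι → ℝ in univ.pi fun _ ↦ Ioo 0 1, (1 - ∏ i, x i ^ d)⁻¹) := by
  have pow_prod (k : ℕ) (x : ι → ℝ) : (∏ i, x i ^ d) ^ k = ∏ i, x i ^ (d * k) := by
    simp_rw [← Finset.prod_pow, pow_mul]
  have moment (k : ℕ) : ∫ x : ι → ℝ in univ.pi fun _ ↦ Ioo 0 1, (∏ i, x i ^ d) ^ k =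
      (((d * k : ℕ) + 1 : ℝ) ^ Fintype.card ι)⁻¹ := by
    simp_rw [pow_prod, integral_cube_prod_pow]
  simp_rw [← moment]
  refine hasSum_integral_pow_inv_one_sub ?_ (fun k ↦ ?_) ?_
  · exact ae_restrict_of_forall_mem (.univ_pi fun _ ↦ measurableSet_Ioo) fun x hx ↦
      prod_pow_mem_Ico_of_mem_cube hd hx
  · simp_rw [pow_prod]
    exact integrableOn_cube_prod_pow (d * k)
  · simp_rw [moment]
    exact summable_inv_mul_nat_add_one_pow hd Fintype.one_lt_card

end Cube

theorem coth_half (x : ℝ) : coth (x / 2) = (exp x + 1) / (exp x - 1) := by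
  have exp_eq : exp x = (cosh (x / 2) + sinh (x / 2)) ^ 2 := by
    rw [cosh_add_sinh, ← exp_nat_mul, Nat.cast_two, mul_div_cancel₀ x two_ne_zero]
  have add_one : exp x + 1 = 2 * exp (x / 2) * cosh (x / 2) := by
    rw [exp_eq, ← cosh_add_sinh]
    linear_combination -cosh_sq_sub_sinh_sq (x / 2)
  have sub_one : exp x - 1 = 2 * exp (x / 2) * sinh (x / 2) := by
    rw [exp_eq, ← cosh_add_sinh]
    linear_combination cosh_sq_sub_sinh_sq (x / 2)
  rw [add_one, sub_one, mul_div_mul_left _ _ (by positivity), coth]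

theorem one_lt_coth {x : ℝ} (hx : 0 < x) : 1 < coth x :=
  (one_lt_div (sinh_pos_iff.2 hx)).2 (sinh_lt_cosh x)

theorem log_coth_pos {x : ℝ} (hx : 0 < x) : 0 < log (coth x) :=
  log_pos (one_lt_coth hx)

theorem log_coth_half_log_coth_half {x : ℝ} (hx : 0 < x) :
    log (coth (log (coth (x / 2)) / 2)) = x := by
  have hexp : 0 < exp x - 1 := sub_pos.2 (one_lt_exp_iff.2 hx)
  have hcoth : coth (log (coth (x / 2)) / 2) = exp x := by
    rw [coth_half, exp_log (one_pos.trans (one_lt_coth (half_pos hx))), coth_half]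
    field_simp
    ring
  rw [hcoth, log_exp]

theorem bijOn_log_coth_half : BijOn (fun x ↦ log (coth (x / 2))) (Ioi 0) (Ioi 0) := by
  have involutive : LeftInvOn (fun x ↦ log (coth (x / 2))) (fun x ↦ log (coth (x / 2))) (Ioi 0) :=
    fun _ ↦ log_coth_half_log_coth_half
  have mapsTo : MapsTo (fun x ↦ log (coth (x / 2))) (Ioi 0) (Ioi 0) :=
    fun _ hx ↦ log_coth_pos (half_pos hx)
  exact InvOn.bijOn ⟨involutive, involutive⟩ mapsTo mapsTo

theorem hasDerivAt_log_coth {x : ℝ} (hx : x ≠ 0) :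
    HasDerivAt (fun x ↦ log (coth x)) (-(sinh x * cosh x)⁻¹) x := by
  have hsinh : sinh x ≠ 0 := sinh_ne_zero.2 hx
  have hcosh : cosh x ≠ 0 := (cosh_pos x).ne'
  refine (((hasDerivAt_cosh x).div (hasDerivAt_sinh x) hsinh).log
    (div_ne_zero hcosh hsinh)).congr_deriv ?_
  simp only [Pi.div_apply]
  field_simp
  linear_combination -cosh_sq x

theorem hasDerivAt_log_coth_half {x : ℝ} (hx : x ≠ 0) :
    HasDerivAt (fun x ↦ log (coth (x / 2))) (-(sinh x)⁻¹) x := by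
  have hsinh : sinh x = 2 * sinh (x / 2) * cosh (x / 2) := by
    rw [← sinh_two_mul, mul_div_cancel₀ x two_ne_zero]
  refine ((hasDerivAt_log_coth (div_ne_zero hx two_ne_zero)).comp x
    ((hasDerivAt_id x).div_const 2)).congr_deriv ?_
  rw [hsinh]
  ring

section ChangeOfVariables

variable {E : Type*} [NormedAddCommGroup E] [NormedSpace ℝ E]

theorem integral_comp_log_coth_half (f : ℝ → E) :
    ∫ x in Ioi 0, f (log (coth (x / 2))) = ∫ u in Ioi 0, (sinh u)⁻¹ • f u := by
  have change_of_variables := integral_image_eq_integral_abs_deriv_smul measurableSet_Ioi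
    (fun x (hx : 0 < x) ↦ (hasDerivAt_log_coth_half hx.ne').hasDerivWithinAt)
    bijOn_log_coth_half.injOn (fun x ↦ f (log (coth (x / 2))))
  rw [bijOn_log_coth_half.image_eq] at change_of_variables
  rw [change_of_variables]
  refine setIntegral_congr_fun measurableSet_Ioi fun u (hu : 0 < u) ↦ ?_
  simp only [log_coth_half_log_coth_half hu, abs_neg,
    abs_of_pos (inv_pos.2 (sinh_pos_iff.2 hu))]

theorem integral_comp_log_coth (f : ℝ → E) :
    ∫ x in Ioi 0, f (log (coth x)) = ∫ u in Ioi 0, (2 * sinh u)⁻¹ • f u := by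
  have rescale := integral_comp_mul_left_Ioi (fun x ↦ f (log (coth (x / 2)))) 0 two_pos
  simp only [mul_div_cancel_left₀ _ (two_ne_zero' ℝ), mul_zero] at rescale
  rw [rescale, integral_comp_log_coth_half, ← integral_smul]
  simp_rw [smul_smul, mul_inv]

end ChangeOfVariables

theorem mellin_ofReal_nat_add_one (f : ℝ → ℝ) (m : ℕ) :
    mellin (fun t ↦ (f t : ℂ)) (m + 1) = ((∫ t in Ioi 0, t ^ m * f t : ℝ) : ℂ) := by
  rw [← integral_complex_ofReal, mellin]
  simp only [add_sub_cancel_right, Complex.cpow_natCast, smul_eq_mul, Complex.ofReal_mul,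
    Complex.ofReal_pow]

theorem hasSum_integral_Ioi_pow_mul {ι : Type*} [Countable ι] {a p : ι → ℝ} {F : ℝ → ℝ} (m : ℕ)
    (hp : ∀ i, 0 < p i) (hF : ∀ t ∈ Ioi 0, HasSum (fun i ↦ a i * exp (-p i * t)) (F t))
    (hsum : Summable fun i ↦ |a i| / p i ^ (m + 1)) :
    HasSum (fun i ↦ m.factorial * a i / p i ^ (m + 1)) (∫ t in Ioi 0, t ^ m * F t) := by
  have re_eq : (m + 1 : ℂ).re = (m + 1 : ℕ) := by simp
  have mellin_series := hasSum_mellin (a := fun i ↦ (a i : ℂ)) (s := m + 1) (F := fun t ↦ (F t : ℂ))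
    (fun i ↦ .inr (hp i)) (by rw [re_eq]; positivity) (fun t ht ↦ mod_cast hF t ht)
    (by simpa only [re_eq, rpow_natCast, Complex.norm_real, norm_eq_abs] using hsum)
  rw [mellin_ofReal_nat_add_one, Complex.Gamma_nat_eq_factorial] at mellin_series
  exact_mod_cast mellin_series

theorem hasSum_exp_neg_odd_mul {u : ℝ} (hu : 0 < u) :
    HasSum (fun k : ℕ ↦ exp (-(2 * k + 1) * u)) (2 * sinh u)⁻¹ := by
  have exp_lt_one : exp (-(2 * u)) < 1 := exp_lt_one_iff.2 (by linarith)
  have term (k : ℕ) : exp (-u) * exp (-(2 * u)) ^ k = exp (-(2 * k + 1) * u) := by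
    rw [← exp_nat_mul, ← exp_add]
    ring_nf
  have total : exp (-u) * (1 - exp (-(2 * u)))⁻¹ = (2 * sinh u)⁻¹ := by
    have factor : 1 - exp (-(2 * u)) = exp (-u) * (2 * sinh u) := by
      rw [sinh_eq, mul_div_cancel₀ _ two_ne_zero, mul_sub, ← exp_add, ← exp_add, neg_add_cancel,
        exp_zero, ← two_mul, mul_neg]
    rw [factor, mul_inv, mul_inv_cancel_left₀ (exp_ne_zero _)]
  simpa only [term, total] using
    (hasSum_geometric_of_lt_one (exp_nonneg _) exp_lt_one).mul_left (exp (-u))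

theorem hasSum_integral_log_coth_pow {m : ℕ} (hm : m ≠ 0) :
    HasSum (fun k : ℕ ↦ m.factorial * (((2 * k : ℕ) + 1 : ℝ) ^ (m + 1))⁻¹)
      (∫ x in Ioi 0, log (coth x) ^ m) := by
  have summable_odd := summable_inv_mul_nat_add_one_pow two_ne_zero (n := m + 1) (by lia)
  rw [integral_comp_log_coth fun u ↦ u ^ m]
  simp_rw [smul_eq_mul, mul_comm _ (_ ^ m)]
  simpa [div_eq_mul_inv] using hasSum_integral_Ioi_pow_mul (F := fun u ↦ (2 * sinh u)⁻¹) m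
    (a := fun _ ↦ 1) (p := fun k : ℕ ↦ 2 * k + 1) (fun k ↦ by positivity)
    (fun u hu ↦ by simpa only [one_mul] using hasSum_exp_neg_odd_mul hu)
    (by simpa using summable_odd)

theorem unit_cube_integral_eq_integral_log_coth_pow (n : ℕ) (hn : 2 ≤ n) :
    (∫ x : Fin n → ℝ in Set.univ.pi fun _ => Set.Ioo (0 : ℝ) 1,
        (1 - ∏ i, (x i) ^ 2)⁻¹) =
      (1 / (Nat.factorial (n - 1) : ℝ)) *
        ∫ x in Set.Ioi (0 : ℝ), Real.log (coth x) ^ (n - 1) := by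
  have : Nontrivial (Fin n) := Fin.nontrivial_iff_two_le.2 hn
  have cube_series := hasSum_integral_cube_inv_one_sub_prod_pow (ι := Fin n) two_ne_zero
  have coth_series := (hasSum_integral_log_coth_pow (m := n - 1) (by lia)).mul_left
    (1 / ((n - 1).factorial : ℝ))
  have factorial_ne_zero : ((n - 1).factorial : ℝ) ≠ 0 := by positivity
  simp only [← mul_assoc, one_div_mul_cancel factorial_ne_zero, one_mul,
    Nat.sub_add_cancel (one_le_two.trans hn)] at coth_series
  rw [Fintype.card_fin] at cube_series
  exact cube_series.unique coth_series
end
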